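/- arXiv:2511.02954 — 8 statements merged into one kernel-verified Lean document; each statement's English description precedes it below -/
import Mathlib

section
/- For every integer n ≥ 4 and every function d : Fin n → ℕ with ∑_{x} d(x) ≤ (1/4)·n·log₂(log₂ n), there exists an integer i with ⌊(1/2)·log₂(log₂ n)⌋ ≤ i ≤ ⌊log₂(log₂ n)⌋ such that the number of x ∈ Fin n with d(x) ≥ 2^i is strictly less than n/2^i. -/
/-- The powers of two not exceeding `m` add up to at most `2 * m`. -/
theorem sum_two_pow_filter_le (s : Finset ℕ) (m : ℕ) :
    ∑ i ∈ s with 2 ^ i ≤ m, 2 ^ i ≤ 2 * m := by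
  rcases Nat.eq_zero_or_pos m with rfl | hm
  · simp
  · have hsub : (s.filter fun i => 2 ^ i ≤ m) ⊆ Finset.range (Nat.log 2 m + 1) := by
      intro i hi
      have h := (Finset.mem_filter.1 hi).2
      exact Finset.mem_range.2 (Nat.lt_succ_of_le (Nat.le_log_of_pow_le one_lt_two h))
    calc ∑ i ∈ s with 2 ^ i ≤ m, 2 ^ i
        ≤ ∑ i ∈ Finset.range (Nat.log 2 m + 1), 2 ^ i := Finset.sum_le_sum_of_subset hsub
      _ ≤ 2 ^ (Nat.log 2 m + 1) := (Nat.geomSum_lt le_rfl fun i hi => Finset.mem_range.1 hi).le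
      _ ≤ 2 * m := by
        rw [pow_succ']
        exact Nat.mul_le_mul_left 2 (Nat.pow_log_le_self 2 hm.ne')

/-- Dyadic layer-cake bound: `∑ 2 ^ i * #{x | 2 ^ i ≤ d x}` over distinct scales `i` is at most
twice the sum of `d`. -/
theorem sum_two_pow_mul_card_le {α : Type*} [Fintype α] (s : Finset ℕ) (d : α → ℕ) :
    ∑ i ∈ s, 2 ^ i * (Finset.univ.filter fun x => 2 ^ i ≤ d x).card ≤ 2 * ∑ x, d x := by
  calc ∑ i ∈ s, 2 ^ i * (Finset.univ.filter fun x => 2 ^ i ≤ d x).card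
      = ∑ i ∈ s, ∑ x, if 2 ^ i ≤ d x then 2 ^ i else 0 := by
        refine Finset.sum_congr rfl fun i _ => ?_
        rw [← Finset.sum_filter, Finset.sum_const, smul_eq_mul, mul_comm]
    _ = ∑ x, ∑ i ∈ s with 2 ^ i ≤ d x, 2 ^ i := by
        rw [Finset.sum_comm]
        simp only [Finset.sum_filter]
    _ ≤ 2 * ∑ x, d x := by
        rw [Finset.mul_sum]
        exact Finset.sum_le_sum fun x _ => sum_two_pow_filter_le s (d x)

/-- Claim 6 ('few_deep'): if the total depth of `n` elements is at most
`(1/4)·n·log₂ log₂ n`, then some depth scale `2^i` with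
`⌊(1/2)·log₂ log₂ n⌋ ≤ i ≤ ⌊log₂ log₂ n⌋` is exceeded by fewer than `n/2^i` elements. -/
theorem stmt_0 (n : ℕ) (hn : 4 ≤ n) (d : Fin n → ℕ)
    (hsum : (∑ x, (d x : ℝ)) ≤ (1 / 4) * n * Real.logb 2 (Real.logb 2 n)) :
    ∃ i : ℕ,
      ⌊(1 / 2 : ℝ) * Real.logb 2 (Real.logb 2 n)⌋ ≤ (i : ℤ) ∧
      (i : ℤ) ≤ ⌊Real.logb 2 (Real.logb 2 n)⌋ ∧
      ((Finset.univ.filter (fun x => 2 ^ i ≤ d x)).card : ℝ) < (n : ℝ) / 2 ^ i := by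
  have hn' : (4 : ℝ) ≤ n := by exact_mod_cast hn
  have hL : 0 ≤ Real.logb 2 (Real.logb 2 n) := by
    refine Real.logb_nonneg one_lt_two ?_
    rw [Real.le_logb_iff_rpow_le one_lt_two (by linarith)]
    norm_num
    linarith
  generalize Real.logb 2 (Real.logb 2 n) = L at hsum hL ⊢
  have hL2 : 0 ≤ 1 / 2 * L := by positivity
  rw [← Int.natCast_floor_eq_floor hL, ← Int.natCast_floor_eq_floor hL2]
  set a := ⌊1 / 2 * L⌋₊
  set b := ⌊L⌋₊
  have hab : a ≤ b := Nat.floor_le_floor (by linarith)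
  have ha : (a : ℝ) ≤ 1 / 2 * L := Nat.floor_le hL2
  have hb : L < b + 1 := Nat.lt_floor_add_one L
  by_contra! hcon
  have hlower : ((b + 1 - a : ℕ) : ℝ) * n ≤
      ∑ i ∈ Finset.Icc a b, 2 ^ i * ((Finset.univ.filter fun x => 2 ^ i ≤ d x).card : ℝ) := by
    rw [← Nat.card_Icc, ← nsmul_eq_mul]
    refine Finset.card_nsmul_le_sum _ _ _ fun i hi => ?_
    obtain ⟨hai, hib⟩ := Finset.mem_Icc.1 hi
    have h := hcon i (by exact_mod_cast hai) (by exact_mod_cast hib)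
    rwa [div_le_iff₀' (by positivity)] at h
  have hupper : ∑ i ∈ Finset.Icc a b,
      2 ^ i * ((Finset.univ.filter fun x => 2 ^ i ≤ d x).card : ℝ) ≤ 2 * ∑ x, (d x : ℝ) := by
    exact_mod_cast sum_two_pow_mul_card_le (Finset.Icc a b) d
  rw [Nat.cast_sub (by omega)] at hlower
  push_cast at hlower
  nlinarith
end

section
/- Let s₁ ≥ s₂ ≥ … ≥ s_m ≥ 1 be integers with s₁ ≥ 2 and s₁ + … + s_m = n. For an integer L let C(L) = ∑_{j : s_j < L} s_j. Let M = min over integers L with 2 ≤ L ≤ n and C(L) < n of (1/4)·C(L)·max{0, log₂(C(L)/(2L))} (this set of L is nonempty since s₁ ≥ 2). Let p : Fin n → List Bool be any function with ∑_{x} (length of p(x)) ≤ 2·M. Then there exists a partition of Fin n into sets X₁, …, X_m with |X_j| = s_j for every j, such that for every j the set {p(x) : x ∈ X_j} is totally ordered by the prefix relation (i.e., all these positions lie on a common root-to-leaf path of the binary tree). -/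
/-- Greedy partition: if at every step a piece with property `P` and the prescribed size can be
split off from any set having at least as many elements as are still to be distributed, then the
whole set can be partitioned into such pieces. -/
theorem exists_partition_of_greedy {α : Type*} [DecidableEq α] (P : Finset α → Prop) :
    ∀ (m : ℕ) (s : Fin m → ℕ) (R : Finset α), R.card = ∑ j, s j →
      (∀ (k : Fin m) (T : Finset α), T.card = ∑ j, (if k ≤ j then s j else 0) →
        ∃ Y ⊆ T, Y.card = s k ∧ P Y) →
      ∃ X : Fin m → Finset α, (∀ j, (X j).card = s j) ∧
        (∀ j j', j ≠ j' → Disjoint (X j) (X j')) ∧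
        (∀ x, x ∈ R ↔ ∃ j, x ∈ X j) ∧ ∀ j, P (X j) := by
  intro m
  induction m with
  | zero =>
    intro s R hR _
    simp only [Finset.univ_eq_empty, Finset.sum_empty, Finset.card_eq_zero] at hR
    exact ⟨fun _ => ∅, fun j => j.elim0, fun j => j.elim0, by simp [hR], fun j => j.elim0⟩
  | succ m ih =>
    intro s R hR h
    obtain ⟨Y, hYR, hYc, hYP⟩ := h 0 R (by simpa using hR)
    have hcard : (R \ Y).card = ∑ j : Fin m, s j.succ := by
      rw [Finset.card_sdiff_of_subset hYR, hR, hYc, Fin.sum_univ_succ, Nat.add_sub_cancel_left]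
    obtain ⟨X, hXc, hXd, hXu, hXP⟩ := ih (fun j => s j.succ) (R \ Y) hcard (fun k T hT =>
      h k.succ T (by rw [hT, Fin.sum_univ_succ]; simp [Fin.succ_ne_zero]))
    have hdis : ∀ j, Disjoint Y (X j) := fun j => by
      rw [Finset.disjoint_right]
      intro x hx
      exact (Finset.mem_sdiff.1 ((hXu x).2 ⟨j, hx⟩)).2
    refine ⟨Fin.cons Y X, ?_, ?_, ?_, ?_⟩
    · intro j
      cases j using Fin.cases <;> simp [hYc, hXc]
    · intro i j hij
      cases i using Fin.cases with
      | zero =>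
        cases j using Fin.cases with
        | zero => exact absurd rfl hij
        | succ j => simpa using hdis j
      | succ i =>
        cases j using Fin.cases with
        | zero => simpa using (hdis i).symm
        | succ j => simpa using hXd i j (fun e => hij (by rw [e]))
    · intro x
      rw [Fin.exists_fin_succ]
      simp only [Fin.cons_zero, Fin.cons_succ, ← hXu, Finset.mem_sdiff]
      have := @hYR x
      tauto
    · intro j
      cases j using Fin.cases <;> simp [hYP, hXP]

/-- If every root-to-leaf path of the binary tree carries at most `b` elements of `R`, then at most
`2 ^ k * b` elements of `R` have depth at most `k`. -/
theorem card_filter_length_le {α : Type*} (R : Finset α) (p : α → List Bool) (b k : ℕ)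
    (h : ∀ w : List Bool, (R.filter fun x => p x <+: w).card ≤ b) :
    (R.filter fun x => (p x).length ≤ k).card ≤ 2 ^ k * b := by
  classical
  have hsub : (R.filter fun x => (p x).length ≤ k) ⊆
      (Finset.univ : Finset (List.Vector Bool k)).biUnion
        fun v => R.filter fun x => p x <+: v.toList := by
    intro x hx
    obtain ⟨hxR, hxk⟩ := Finset.mem_filter.1 hx
    refine Finset.mem_biUnion.2
      ⟨⟨p x ++ List.replicate (k - (p x).length) false, by simp; omega⟩, Finset.mem_univ _, ?_⟩
    exact Finset.mem_filter.2 ⟨hxR, List.prefix_append _ _⟩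
  refine (Finset.card_le_card hsub).trans
    ((Finset.card_biUnion_le_card_mul _ _ b fun v _ => h v.toList).trans ?_)
  simp [card_vector]

/-- A set of at least `c + l` positions of small total depth has `l` elements on a common
root-to-leaf path. -/
theorem exists_chain_of_sum_length_le {α : Type*} (R : Finset α) (p : α → List Bool) (c l : ℕ)
    (hl : 1 ≤ l) (hR : c + l ≤ R.card)
    (hp : (∑ x ∈ R, ((p x).length : ℝ)) ≤
      (1 / 2) * (c : ℝ) * max 0 (Real.logb 2 ((c : ℝ) / (2 * l)))) :
    ∃ Y ⊆ R, Y.card = l ∧ ∀ x ∈ Y, ∀ y ∈ Y, p x <+: p y ∨ p y <+: p x := by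
  by_cases hw : ∃ w : List Bool, l ≤ (R.filter fun x => p x <+: w).card
  · obtain ⟨w, hw⟩ := hw
    obtain ⟨Y, hY, hYc⟩ := Finset.exists_subset_card_eq hw
    refine ⟨Y, hY.trans (Finset.filter_subset _ _), hYc, fun x hx y hy => ?_⟩
    exact List.prefix_or_prefix_of_prefix (Finset.mem_filter.1 (hY hx)).2
      (Finset.mem_filter.1 (hY hy)).2
  · exfalso
    push Not at hw
    have hl0 : (0 : ℝ) < l := by exact_mod_cast hl
    rcases le_or_gt (Real.logb 2 ((c : ℝ) / (2 * l))) 0 with hlog | hlog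
    · rw [max_eq_left hlog, mul_zero] at hp
      have hzero : ∀ x ∈ R, p x <+: [] := by
        have h0 := (Finset.sum_eq_zero_iff_of_nonneg (fun x _ => by positivity)).1
          (le_antisymm hp (Finset.sum_nonneg fun x _ => by positivity))
        intro x hx
        have := h0 x hx
        simpa using this
      have := hw []
      rw [Finset.filter_true_of_mem hzero] at this
      omega
    · rw [max_eq_right hlog.le] at hp
      set t := Real.logb 2 ((c : ℝ) / (2 * l)) with ht
      have hc0 : (0 : ℝ) < c := by
        rcases Nat.eq_zero_or_pos c with h | h
        · simp [ht, h] at hlog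
        · exact_mod_cast h
      set k := ⌊t⌋₊
      have hkt : (k : ℝ) ≤ t := Nat.floor_le hlog.le
      have htk : t < k + 1 := Nat.lt_floor_add_one t
      have hpow : (2 : ℝ) ^ k * (2 * l) ≤ c := by
        rw [← le_div_iff₀ (by positivity), ← Real.rpow_natCast,
          ← Real.le_logb_iff_rpow_le one_lt_two (by positivity)]
        exact hkt
      have hshallow : ((R.filter fun x => (p x).length ≤ k).card : ℝ) ≤ 2 ^ k * l := by
        exact_mod_cast card_filter_length_le R p l k fun w => (hw w).le
      have hsplit : ((R.filter fun x => (p x).length ≤ k).card : ℝ) +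
          ((R.filter fun x => ¬ (p x).length ≤ k).card : ℝ) = R.card := by
        exact_mod_cast Finset.card_filter_add_card_filter_not _
      have hR' : (c : ℝ) + l ≤ R.card := by exact_mod_cast hR
      have hdeep : (c : ℝ) / 2 ≤ (R.filter fun x => ¬ (p x).length ≤ k).card := by
        linarith
      have hsum : ((R.filter fun x => ¬ (p x).length ≤ k).card : ℝ) * (k + 1) ≤
          ∑ x ∈ R, ((p x).length : ℝ) := by
        rw [← nsmul_eq_mul]
        refine (Finset.card_nsmul_le_sum _ (fun x => ((p x).length : ℝ)) _ fun x hx => ?_).trans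
          (Finset.sum_le_sum_of_subset_of_nonneg (Finset.filter_subset _ _)
            fun x _ _ => by positivity)
        have := (Finset.mem_filter.1 hx).2
        exact_mod_cast (by omega : k + 1 ≤ (p x).length)
      have hle : (c : ℝ) / 2 * (k + 1) ≤
          ((R.filter fun x => ¬ (p x).length ≤ k).card : ℝ) * (k + 1) :=
        mul_le_mul_of_nonneg_right hdeep (by positivity)
      have hlt : (c : ℝ) / 2 * t < (c : ℝ) / 2 * (k + 1) :=
        mul_lt_mul_of_pos_left htk (by positivity)
      linarith

/-- Claim 9 ('isomorphic'): if the total depth of all elements is at most `2·M`, where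
`M = min over 2 ≤ L ≤ n with C(L) < n of (1/4)·C(L)·max{0, log₂(C(L)/(2L))}`,
then the cluster structure with sizes `s₁ ≥ … ≥ s_m` can be realized so that every
cluster lies on a single root-to-leaf path of the binary tree. -/
theorem stmt_2 (m n : ℕ) (hm : 0 < m) (s : Fin m → ℕ)
    (hdec : ∀ i j : Fin m, i ≤ j → s j ≤ s i)
    (hpos : ∀ j, 1 ≤ s j)
    (h2 : 2 ≤ s ⟨0, hm⟩)
    (hsum : ∑ j, s j = n)
    (C : ℕ → ℕ)
    (hC : ∀ L, C L = ∑ j ∈ Finset.univ.filter (fun j => s j < L), s j)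
    (M : ℝ)
    (hM : M = sInf {y : ℝ | ∃ L : ℕ, 2 ≤ L ∧ L ≤ n ∧ C L < n ∧
      y = (1 / 4) * (C L : ℝ) * max 0 (Real.logb 2 ((C L : ℝ) / (2 * L)))})
    (p : Fin n → List Bool)
    (hp : (∑ x, ((p x).length : ℝ)) ≤ 2 * M) :
    ∃ X : Fin m → Finset (Fin n),
      (∀ j, (X j).card = s j) ∧
      (∀ j j', j ≠ j' → Disjoint (X j) (X j')) ∧
      (∀ x, ∃ j, x ∈ X j) ∧
      (∀ j, ∀ x ∈ X j, ∀ y ∈ X j, p x <+: p y ∨ p y <+: p x) := by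
  suffices hstep : ∀ (k : Fin m) (T : Finset (Fin n)),
      T.card = ∑ j, (if k ≤ j then s j else 0) → ∃ Y ⊆ T, Y.card = s k ∧
        ∀ x ∈ Y, ∀ y ∈ Y, p x <+: p y ∨ p y <+: p x by
    obtain ⟨X, hXc, hXd, hXu, hXP⟩ := exists_partition_of_greedy
      (fun Y : Finset (Fin n) => ∀ x ∈ Y, ∀ y ∈ Y, p x <+: p y ∨ p y <+: p x) m s Finset.univ
      (by simp [hsum]) hstep
    exact ⟨X, hXc, hXd, fun x => (hXu x).1 (Finset.mem_univ x), hXP⟩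
  intro k T hT
  have hTk : C (s k) + s k ≤ T.card := by
    have hk : k ∉ Finset.univ.filter (fun j => s j < s k) := by simp
    rw [hT, hC, ← Finset.sum_filter, add_comm, ← Finset.sum_insert hk]
    refine Finset.sum_le_sum_of_subset fun j hj => ?_
    simp only [Finset.mem_insert, Finset.mem_filter, Finset.mem_univ, true_and] at hj ⊢
    rcases hj with rfl | hj
    · exact le_rfl
    · by_contra hjk
      exact absurd (hdec j k (not_le.1 hjk).le) (not_le.2 hj)
  rcases (hpos k).eq_or_lt with h1 | h1
  · obtain ⟨x, hx⟩ := Finset.card_pos.1 (by omega : 0 < T.card)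
    refine ⟨{x}, Finset.singleton_subset_iff.2 hx, by simp [h1], ?_⟩
    simp
  · have hTn : T.card ≤ n := by simpa using T.card_le_univ
    refine exists_chain_of_sum_length_le T p (C (s k)) (s k) (hpos k) hTk ?_
    have hMle : M ≤ (1 / 4) * (C (s k) : ℝ) *
        max 0 (Real.logb 2 ((C (s k) : ℝ) / (2 * (s k : ℕ)))) := by
      rw [hM]
      refine csInf_le ⟨0, ?_⟩ ⟨s k, h1, by omega, by omega, rfl⟩
      rintro y ⟨L, -, -, -, rfl⟩
      positivity
    have hsub : (∑ x ∈ T, ((p x).length : ℝ)) ≤ ∑ x, ((p x).length : ℝ) :=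
      Finset.sum_le_sum_of_subset_of_nonneg (Finset.subset_univ _) fun x _ _ => by positivity
    linarith
end

section
/- There exists n₀ such that for every integer n ≥ n₀ the following holds. For every function p : Fin n → List Bool with ∑_{x} (length of p(x)) ≤ (1/4)·n·log₂(log₂ n), there exist an integer L with 2 ≤ L ≤ n, an integer r ≥ 1, and pairwise disjoint subsets X₁, …, X_r of Fin n, each of size exactly L, such that for every j the set {p(x) : x ∈ X_j} is totally ordered by the prefix relation, and the number C = n − r·L of elements not covered by the X_j satisfies C·max{0, log₂(C/L)} ≤ 4·n. -/
open Finset in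
/-- Greedy packing: a finite set colored by a finite nonempty type contains disjoint monochromatic
blocks of size `L` leaving fewer than `card κ * L` elements uncovered. -/
theorem exists_disjoint_monochromatic_blocks {α κ : Type*} [DecidableEq α] [Fintype κ]
    [DecidableEq κ] [Nonempty κ] (f : α → κ) {L : ℕ} (hL : 0 < L) (S : Finset α) :
    ∃ (r : ℕ) (X : Fin r → Finset α), (∀ i j, i ≠ j → Disjoint (X i) (X j)) ∧
      (∀ i, #(X i) = L) ∧ (∀ i, X i ⊆ S) ∧ (∀ i, ∀ x ∈ X i, ∀ y ∈ X i, f x = f y) ∧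
      #S < r * L + Fintype.card κ * L := by
  induction S using Finset.strongInduction with
  | H S ih =>
  by_cases hS : #S < Fintype.card κ * L
  · exact ⟨0, Fin.elim0, fun i => i.elim0, fun i => i.elim0, fun i => i.elim0,
      fun i => i.elim0, by simpa using hS⟩
  · obtain ⟨c, -, hc⟩ := exists_le_card_fiber_of_mul_le_card_of_maps_to (s := S) (t := univ)
      (f := f) (n := L) (fun _ _ => mem_univ _) univ_nonempty (by simpa using hS)
    obtain ⟨T, hT, hTL⟩ := exists_subset_card_eq hc
    have hTS : T ⊆ S := hT.trans (filter_subset _ _)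
    have hTne : T.Nonempty := card_pos.mp (by lia)
    obtain ⟨r, X, hdisj, hcard, hsub, hmono, hlt⟩ := ih (S \ T) (sdiff_ssubset hTS hTne)
    have hXT : ∀ i, Disjoint (X i) T := fun i =>
      disjoint_of_subset_left (hsub i) sdiff_disjoint
    refine ⟨r + 1, Fin.cons T X, ?_, ?_, ?_, ?_, ?_⟩
    · intro i j
      refine Fin.cases ?_ (fun i => ?_) i <;> refine Fin.cases ?_ (fun j => ?_) j
      · simp
      · intro _; simpa using (hXT j).symm
      · intro _; simpa using hXT i
      · intro hij; simpa using hdisj i j (by simpa using hij)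
    · intro i; refine Fin.cases ?_ (fun i => ?_) i
      · simpa using hTL
      · simpa using hcard i
    · intro i; refine Fin.cases ?_ (fun i => ?_) i
      · simpa using hTS
      · simpa using (hsub i).trans sdiff_subset
    · intro i; refine Fin.cases ?_ (fun i => ?_) i
      · intro x hx y hy
        exact (mem_filter.mp (hT hx)).2.trans (mem_filter.mp (hT hy)).2.symm
      · simpa using hmono i
    · rw [card_sdiff_of_subset hTS, hTL] at hlt
      rw [add_mul]
      lia

/-- Two lists of length at most `h` that agree after padding to length `h` are comparable. -/
theorem List.prefix_or_prefix_of_getD_eq {α : Type*} {a : α} {h : ℕ} {l₁ l₂ : List α}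
    (h₁ : l₁.length ≤ h) (h₂ : l₂.length ≤ h)
    (heq : ∀ i < h, l₁.getD i a = l₂.getD i a) : l₁ <+: l₂ ∨ l₂ <+: l₁ := by
  rcases le_total l₁.length l₂.length with hle | hle
  · refine Or.inl (List.prefix_iff_getElem.mpr ⟨hle, fun i hi => ?_⟩)
    rw [← List.getD_eq_getElem l₁ a hi, ← List.getD_eq_getElem l₂ a (hi.trans_le hle)]
    exact heq i (hi.trans_le h₁)
  · refine Or.inr (List.prefix_iff_getElem.mpr ⟨hle, fun i hi => ?_⟩)
    rw [← List.getD_eq_getElem l₂ a hi, ← List.getD_eq_getElem l₁ a (hi.trans_le hle)]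
    exact (heq i (hi.trans_le h₂)).symm

open Finset in
/-- The tail counts of a function to `ℕ` sum to at most its total. -/
theorem sum_card_filter_lt_le {ι : Type*} [Fintype ι] (d : ι → ℕ) (m : ℕ) :
    ∑ h ∈ Icc 1 m, #{x | h < d x} ≤ ∑ x, d x := by
  simp only [card_filter]
  rw [sum_comm]
  refine sum_le_sum fun x _ => ?_
  rw [← card_filter]
  calc #{h ∈ Icc 1 m | h < d x} ≤ #(range (d x)) := card_le_card fun h hh => by
        simpa using (mem_filter.mp hh).2
    _ = d x := card_range _

open Finset in
/-- If every tail count at levels `4, …, m` exceeds `card ι / h`, the total is at least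
`card ι * (log (m + 1) - 3)`. -/
theorem card_mul_log_sub_le_sum {ι : Type*} [Fintype ι] (d : ι → ℕ) (m : ℕ)
    (hd : ∀ h, 4 ≤ h → h ≤ m → Fintype.card ι ≤ #{x | h < d x} * h) :
    (Fintype.card ι : ℝ) * (Real.log (m + 1) - 3) ≤ ∑ x, (d x : ℝ) := by
  set N : ℝ := (Fintype.card ι : ℝ)
  have hlog : Real.log (m + 1) ≤ ∑ h ∈ Icc 1 m, (h : ℝ)⁻¹ := by
    have := log_add_one_le_harmonic m
    rw [harmonic_eq_sum_Icc] at this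
    push_cast at this
    exact this
  have hterm : ∀ h ∈ Icc 1 m,
      N * (h : ℝ)⁻¹ ≤ (#{x | h < d x} : ℝ) + if h ≤ 3 then N else 0 := by
    intro h hh
    obtain ⟨h1, hm⟩ := mem_Icc.mp hh
    have hpos : (1 : ℝ) ≤ h := by exact_mod_cast h1
    split_ifs with h3
    · have : N * (h : ℝ)⁻¹ ≤ N :=
        mul_le_of_le_one_right (Nat.cast_nonneg _) (inv_le_one_of_one_le₀ hpos)
      have : (0 : ℝ) ≤ (#{x | h < d x} : ℝ) := Nat.cast_nonneg _
      linarith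
    · rw [add_zero, ← div_eq_mul_inv, div_le_iff₀ (by linarith), ← Nat.cast_mul]
      exact Nat.cast_le.mpr (hd h (by lia) hm)
  have hsmall : ∑ h ∈ Icc 1 m, (if h ≤ 3 then N else 0) ≤ 3 * N := by
    rw [← sum_filter, sum_const, nsmul_eq_mul]
    refine mul_le_mul_of_nonneg_right ?_ (Nat.cast_nonneg _)
    have : #{h ∈ Icc 1 m | h ≤ 3} ≤ #(Icc 1 3) := card_le_card fun h hh => by
      simp only [mem_filter, mem_Icc] at hh ⊢
      lia
    exact_mod_cast this
  have htail : ∑ h ∈ Icc 1 m, (#{x | h < d x} : ℝ) ≤ ∑ x, (d x : ℝ) := by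
    exact_mod_cast sum_card_filter_lt_le d m
  have hsum := sum_le_sum hterm
  rw [sum_add_distrib, ← mul_sum] at hsum
  have := mul_le_mul_of_nonneg_left hlog (Nat.cast_nonneg _ : 0 ≤ N)
  linarith

open Finset in
/-- If the total of `d : Fin n → ℕ` is at most `n * log₂ log₂ n / 4`, then some level `h` with
`2 ^ (2 * h + 1) ≤ n` has at most `n / h` indices above it. -/
theorem exists_level_card_mul_le {n : ℕ} (hn : 2 ^ 2 ^ 16 ≤ n) (d : Fin n → ℕ)
    (hd : ∑ x, (d x : ℝ) ≤ (1 / 4) * n * Real.logb 2 (Real.logb 2 n)) :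
    ∃ h, 4 ≤ h ∧ 2 ^ (2 * h + 1) ≤ n ∧ #{x | h < d x} * h ≤ n := by
  have hn0 : n ≠ 0 := fun h0 => by
    subst h0
    exact absurd hn (not_le.mpr (Nat.pow_pos (by norm_num)))
  have hnpos : (0 : ℝ) < n := by exact_mod_cast Nat.pos_of_ne_zero hn0
  by_contra! hcon
  set K := Nat.log 2 n
  have hK : 2 ^ 16 ≤ K := Nat.le_log_of_pow_le (by norm_num) hn
  have hKn : 2 ^ K ≤ n := Nat.pow_log_le_self 2 hn0
  have hlower := card_mul_log_sub_le_sum d ((K - 1) / 2) fun h h4 hm => by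
    rw [Fintype.card_fin]
    refine (hcon h h4 (le_trans (Nat.pow_le_pow_right (by norm_num) ?_) hKn)).le
    lia
  rw [Fintype.card_fin] at hlower
  have hlogb_lt : Real.logb 2 n < K + 1 := by
    rw [Real.logb_lt_iff_lt_rpow (by norm_num) hnpos]
    exact_mod_cast Nat.lt_pow_succ_log_self (b := 2) (by norm_num) n
  have hle_logb : (K : ℝ) ≤ Real.logb 2 n := by
    rw [Real.le_logb_iff_rpow_le (by norm_num) hnpos]
    exact_mod_cast hKn
  have hKreal : (2 : ℝ) ^ 16 ≤ K := by exact_mod_cast hK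
  set y := Real.logb 2 n
  have hy : (2 : ℝ) ^ 16 ≤ y := hKreal.trans hle_logb
  have hypos : 0 < y := lt_of_lt_of_le (by positivity) hy
  have hloglog : 16 ≤ Real.logb 2 y := by
    rw [Real.le_logb_iff_rpow_le (by norm_num) hypos]
    exact_mod_cast hy
  have hm : y / 4 ≤ ((K - 1) / 2 : ℕ) + 1 := by
    have : (K : ℝ) ≤ 2 * (((K - 1) / 2 : ℕ) + 1) := by
      exact_mod_cast (by lia : K ≤ 2 * ((K - 1) / 2 + 1))
    linarith
  have hlog := Real.log_le_log (by positivity) hm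
  have hlog4 : Real.log 4 = 2 * Real.log 2 := by
    rw [show (4 : ℝ) = 2 ^ 2 by norm_num, Real.log_pow]
    norm_num
  rw [Real.log_div hypos.ne' (by norm_num), hlog4] at hlog
  have hlogy : Real.log y = Real.logb 2 y * Real.log 2 :=
    (div_mul_cancel₀ _ (Real.log_pos (by norm_num)).ne').symm
  have hlog2 := Real.log_two_gt_d9
  have hlog2' := Real.log_two_lt_d9
  have hcmp : 1 / 4 * Real.logb 2 y < Real.log (((K - 1) / 2 : ℕ) + 1) - 3 := by
    nlinarith
  nlinarith [mul_lt_mul_of_pos_left hcmp hnpos]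

open Finset in
/-- Packing at cluster size `L` when the positions of depth more than `h` are set aside. -/
theorem exists_path_clusters {n : ℕ} (p : Fin n → List Bool) (h : ℕ) {L : ℕ} (hL : 0 < L) :
    ∃ (r : ℕ) (X : Fin r → Finset (Fin n)), (∀ i j, i ≠ j → Disjoint (X i) (X j)) ∧
      (∀ i, #(X i) = L) ∧ (∀ i, ∀ x ∈ X i, ∀ y ∈ X i, p x <+: p y ∨ p y <+: p x) ∧
      n - r * L ≤ #{x | h < (p x).length} + 2 ^ h * L := by
  obtain ⟨r, X, hdisj, hcard, hsub, hmono, hlt⟩ :=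
    exists_disjoint_monochromatic_blocks (fun x (i : Fin h) => (p x).getD i false) hL
      {x | (p x).length ≤ h}
  refine ⟨r, X, hdisj, hcard, fun i x hx y hy => ?_, ?_⟩
  · exact List.prefix_or_prefix_of_getD_eq (mem_filter.mp (hsub i hx)).2
      (mem_filter.mp (hsub i hy)).2 fun k hk => congrFun (hmono i x hx y hy) ⟨k, hk⟩
  · have hsplit := card_filter_add_card_filter_not (s := (univ : Finset (Fin n)))
      (fun x => (p x).length ≤ h)
    simp only [not_le, card_univ, Fintype.card_fin] at hsplit
    simp only [Fintype.card_pi, Fintype.card_bool, prod_const, card_univ, Fintype.card_fin] at hlt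
    lia

/-- If `C ≤ N + 2 ^ h * L` with `N ≤ n / h` and `L = ⌊n / 4 ^ h⌋`, then `C * (2 * h + 1) ≤ 4 * n`. -/
theorem leftover_mul_le {n h N C : ℕ} (h4 : 4 ≤ h) (hN : N * h ≤ n)
    (hC : C ≤ N + 2 ^ h * (n / 2 ^ (2 * h))) : C * (2 * h + 1) ≤ 4 * n := by
  have hdiv : n / 2 ^ (2 * h) * 2 ^ (2 * h) ≤ n := Nat.div_mul_le_self _ _
  have hpow : 2 * h + 1 ≤ 2 ^ h := by
    clear hN hC hdiv
    induction h, h4 using Nat.le_induction with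
    | base => norm_num
    | succ k hk ih => rw [pow_succ]; lia
  have hN' : N * (2 * h + 1) ≤ 3 * n := by nlinarith
  have hrest : 2 ^ h * (n / 2 ^ (2 * h)) * (2 * h + 1) ≤ n :=
    calc 2 ^ h * (n / 2 ^ (2 * h)) * (2 * h + 1) ≤ 2 ^ h * (n / 2 ^ (2 * h)) * 2 ^ h := by gcongr
      _ = n / 2 ^ (2 * h) * 2 ^ (2 * h) := by ring
      _ ≤ n := hdiv
  calc C * (2 * h + 1) ≤ (N + 2 ^ h * (n / 2 ^ (2 * h))) * (2 * h + 1) := by gcongr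
    _ ≤ 4 * n := by rw [add_mul]; lia

/-- Combinatorial core of Theorem 5: for large `n`, if the total depth of the `n`
positions is at most `(1/4)·n·log₂ log₂ n`, then the elements can be packed into
`r ≥ 1` disjoint clusters of equal size `L` (each on one root-to-leaf path) so that
the `C = n − r·L` leftover elements satisfy `C·max{0, log₂(C/L)} ≤ 4n`. -/
theorem stmt_3 : ∃ n₀ : ℕ, ∀ n : ℕ, n₀ ≤ n →
    ∀ p : Fin n → List Bool,
      (∑ x, ((p x).length : ℝ)) ≤ (1 / 4) * n * Real.logb 2 (Real.logb 2 n) →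
      ∃ (L r : ℕ), 2 ≤ L ∧ L ≤ n ∧ 1 ≤ r ∧
        ∃ X : Fin r → Finset (Fin n),
          (∀ i j, i ≠ j → Disjoint (X i) (X j)) ∧
          (∀ i, (X i).card = L) ∧
          (∀ i, ∀ x ∈ X i, ∀ y ∈ X i, p x <+: p y ∨ p y <+: p x) ∧
          ((n - r * L : ℕ) : ℝ) *
              max 0 (Real.logb 2 (((n - r * L : ℕ) : ℝ) / L)) ≤ 4 * n := by
  refine ⟨2 ^ 2 ^ 16, fun n hn p hp => ?_⟩
  obtain ⟨h, h4, hpow, hN⟩ := exists_level_card_mul_le hn (fun x => (p x).length) hp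
  have hpow_pos : 0 < 2 ^ (2 * h) := by positivity
  have hL2 : 2 ≤ n / 2 ^ (2 * h) := by
    rw [Nat.le_div_iff_mul_le hpow_pos, ← pow_succ']
    exact hpow
  obtain ⟨r, X, hdisj, hcard, hpre, hC⟩ :=
    exists_path_clusters p h (L := n / 2 ^ (2 * h)) (by lia)
  have hmul := leftover_mul_le h4 hN hC
  have hnL : n ≤ 2 ^ (2 * h + 1) * (n / 2 ^ (2 * h)) := by
    have := Nat.lt_mul_div_succ n hpow_pos
    rw [mul_add, mul_one] at this
    rw [pow_succ, mul_assoc]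
    nlinarith
  have hnpos : 0 < n := lt_of_lt_of_le (by positivity) hpow
  set L := n / 2 ^ (2 * h)
  refine ⟨L, r, hL2, Nat.div_le_self _ _, ?_, X, hdisj, hcard, hpre, ?_⟩
  · by_contra! hr
    obtain rfl : r = 0 := by lia
    simp only [zero_mul, Nat.sub_zero] at hmul
    nlinarith
  · have hCn : n - r * L ≤ n := Nat.sub_le _ _
    set C := n - r * L
    have hlog : max 0 (Real.logb 2 ((C : ℝ) / L)) ≤ 2 * h + 1 := by
      refine max_le (by positivity) ?_
      rcases Nat.eq_zero_or_pos C with hC0 | hCpos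
      · simp only [hC0, Nat.cast_zero, zero_div, Real.logb_zero]
        positivity
      · have hLpos : (0 : ℝ) < L := by exact_mod_cast (by lia : 0 < L)
        have hCpos' : (0 : ℝ) < C := by exact_mod_cast hCpos
        rw [Real.logb_le_iff_le_rpow (by norm_num) (by positivity), div_le_iff₀ hLpos]
        exact_mod_cast hCn.trans hnL
    calc (C : ℝ) * max 0 (Real.logb 2 ((C : ℝ) / L)) ≤ C * (2 * h + 1) := by gcongr
      _ ≤ 4 * n := by exact_mod_cast hmul
end

section
/- Let s be a multiset of positive integers with at least two elements and with sum n, and let s' be a sub-multiset of s obtained as follows: s = s' + t for some multiset t such that every element of t is ≥ every element of s', the sum n' of s' satisfies n' ≤ (3/4)·n, and the deletion is minimal, i.e., t is nonempty and n' + min(t) > (3/4)·n. For an integer L, let C(L) (resp. C'(L)) be the sum of the elements of s (resp. s') that are < L, and D(L) (resp. D'(L)) the number of elements of s (resp. s') that are ≥ L. Then min( n'/8 , (1/32)·min_{L ≥ 1, C'(L) < n'} (C'(L) + D'(L))·max{1, log₂ D'(L)} ) ≥ (1/1000)·min( n , min_{L ≥ 1, C(L) < n/2} (C(L) + D(L))·max{1,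 log₂ D(L)} ). -/
/-- The sums of the elements below a threshold and of the remaining ones add up to the total. -/
lemma sum_filter_lt_add_sum_filter_ge (s : Multiset ℕ) (L : ℕ) :
    (s.filter (fun a => a < L)).sum + (s.filter (fun a => L ≤ a)).sum = s.sum := by
  have h := Multiset.filter_add_not (fun a => a < L) s
  simp only [not_lt] at h
  rw [← Multiset.sum_add, h]

/-- Increasing the argument by a factor of at most four at most triples `max 1 (log₂ ·)`. -/
lemma max_one_logb_two_le {x y : ℝ} (hx : 1 ≤ x) (hy : 0 < y) (h : y ≤ 4 * x) :
    max 1 (Real.logb 2 y) ≤ 3 * max 1 (Real.logb 2 x) := by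
  have hlog : Real.logb 2 y ≤ 2 + Real.logb 2 x := by
    have h4 : Real.logb 2 4 = 2 := by
      rw [show (4 : ℝ) = 2 ^ (2 : ℝ) by norm_num]
      exact Real.logb_rpow (by norm_num) (by norm_num)
    calc Real.logb 2 y ≤ Real.logb 2 (4 * x) :=
          Real.logb_le_logb_of_le (by norm_num) hy h
      _ = 2 + Real.logb 2 x := by
          rw [Real.logb_mul (by norm_num) (by linarith), h4]
  have h1 := le_max_left 1 (Real.logb 2 x)
  have h2 := le_max_right 1 (Real.logb 2 x)
  exact max_le (by linarith) (by linarith)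

/-- If `s'` has an element at least `L` and `t` dominates `s'`, no element of `t` is below `L`. -/
lemma forall_le_of_sum_filter_lt {s' t : Multiset ℕ} {L : ℕ}
    (hge : ∀ a ∈ t, ∀ b ∈ s', b ≤ a) (hL : (s'.filter (fun a => a < L)).sum < s'.sum) :
    ∀ a ∈ t, L ≤ a := by
  obtain ⟨b, hb, hLb⟩ : ∃ b ∈ s', L ≤ b := by
    by_contra! h
    rw [Multiset.filter_eq_self.2 h] at hL
    exact hL.false
  exact fun a ha => hLb.trans (hge a ha b hb)

/-- If less than half of the total lies below `L`, at most one more element is deleted than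
there are remaining elements of size at least `L`. -/
lemma card_le_card_filter_add_one {s' t : Multiset ℕ} {L a : ℕ}
    (hat : ∀ b ∈ t, a ≤ b) (has : ∀ b ∈ s', b ≤ a)
    (hmin : 3 * (s'.sum + t.sum) < 4 * (s'.sum + a))
    (hL : 2 * (s'.filter (fun a => a < L)).sum < s'.sum + t.sum) :
    t.card ≤ (s'.filter (fun a => L ≤ a)).card + 1 := by
  have hsum := sum_filter_lt_add_sum_filter_ge s' L
  have hD : (s'.filter (fun a => L ≤ a)).sum ≤ (s'.filter (fun a => L ≤ a)).card * a := by
    simpa using Multiset.sum_le_card_nsmul (s'.filter (fun a => L ≤ a)) a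
      (fun b hb => has b (Multiset.mem_of_mem_filter hb))
  have ht : t.card * a ≤ t.sum := by simpa using Multiset.card_nsmul_le_sum (s := t) hat
  by_contra! h
  have : ((s'.filter (fun a => L ≤ a)).card + 2) * a ≤ t.card * a :=
    Nat.mul_le_mul_right a h
  rw [add_mul] at this
  omega

/-- Lemma 10 ('linear_subset'): relating the Block-Sorting lower-bound quantity of the
trimmed multiset `s'` (obtained from `s` by deleting largest elements until the sum is
at most `(3/4)·n`, minimally so) to that of the original multiset `s`. -/
theorem stmt_4 (n n' : ℕ) (s s' t : Multiset ℕ)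
    (hpos : ∀ a ∈ s, 0 < a)
    (hcard : 2 ≤ Multiset.card s)
    (hsum : s.sum = n)
    (hsplit : s = s' + t)
    (ht : t ≠ 0)
    (hge : ∀ a ∈ t, ∀ b ∈ s', b ≤ a)
    (hn' : s'.sum = n')
    (hn'le : (n' : ℝ) ≤ (3 / 4) * n)
    (hminimal : ∀ a ∈ t, (3 / 4 : ℝ) * n < (n' : ℝ) + a) :
    min ((n' : ℝ) / 8)
      ((1 / 32) * sInf {y : ℝ | ∃ L : ℕ, 1 ≤ L ∧
        (s'.filter (fun a => a < L)).sum < n' ∧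
        y = (((s'.filter (fun a => a < L)).sum : ℝ) +
              ((s'.filter (fun a => L ≤ a)).card : ℝ)) *
            max 1 (Real.logb 2 (((s'.filter (fun a => L ≤ a)).card : ℝ)))})
    ≥ (1 / 1000) * min (n : ℝ)
      (sInf {y : ℝ | ∃ L : ℕ, 1 ≤ L ∧
        (((s.filter (fun a => a < L)).sum : ℝ)) < (n : ℝ) / 2 ∧
        y = (((s.filter (fun a => a < L)).sum : ℝ) +
              ((s.filter (fun a => L ≤ a)).card : ℝ)) *
            max 1 (Real.logb 2 (((s.filter (fun a => L ≤ a)).card : ℝ)))}) := by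
  set S : Set ℝ := {y : ℝ | ∃ L : ℕ, 1 ≤ L ∧
        (((s.filter (fun a => a < L)).sum : ℝ)) < (n : ℝ) / 2 ∧
        y = (((s.filter (fun a => a < L)).sum : ℝ) +
              ((s.filter (fun a => L ≤ a)).card : ℝ)) *
            max 1 (Real.logb 2 (((s.filter (fun a => L ≤ a)).card : ℝ)))}
  have hbdd : BddBelow S := by
    refine ⟨0, ?_⟩
    rintro y ⟨L, -, -, rfl⟩
    positivity
  obtain ⟨a, ha, hat⟩ : ∃ a ∈ t, ∀ b ∈ t, a ≤ b := by
    obtain ⟨a, ha, h⟩ := Finset.exists_min_image t.toFinset id (by simpa using ht)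
    exact ⟨a, by simpa using ha, fun b hb => h b (by simpa using hb)⟩
  have has : ∀ b ∈ s', b ≤ a := hge a ha
  have hn : s'.sum + t.sum = n := by rw [← hsum, hsplit, Multiset.sum_add]
  have hmin : 3 * n < 4 * (n' + a) := by
    have h := hminimal a ha
    have : (3 * n : ℝ) < 4 * (n' + a) := by linarith
    exact_mod_cast this
  have htcard : t.card * a ≤ t.sum := by simpa using Multiset.card_nsmul_le_sum (s := t) hat
  have htpos : 0 < t.card := Multiset.card_pos.2 ht
  have hs'pos : 0 < n' := by
    by_contra! h0
    have hs' : s' = 0 := by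
      refine Multiset.eq_zero_of_forall_notMem fun b hb => ?_
      have h1 := Multiset.le_sum_of_mem hb
      have h2 := hpos b (by rw [hsplit]; exact Multiset.mem_add.2 (Or.inl hb))
      omega
    have : 2 * a ≤ t.card * a := Nat.mul_le_mul_right a (by simpa [hsplit, hs'] using hcard)
    omega
  refine le_min ?_ ?_
  · rcases le_or_gt n (125 * n') with h | h
    · have h' : (n : ℝ) ≤ 125 * n' := by exact_mod_cast h
      linarith [min_le_left (n : ℝ) (sInf S)]
    · have hcard1 : t.card = 1 := by
        by_contra hne
        have : 2 * a ≤ t.card * a := Nat.mul_le_mul_right a (by omega)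
        omega
      have hlt : ∀ b ∈ s', b < a := fun b hb => by
        have := Multiset.le_sum_of_mem hb
        omega
      have hC : (s.filter (fun b => b < a)).sum = n' := by
        rw [hsplit, Multiset.filter_add, Multiset.filter_eq_self.2 hlt,
          Multiset.filter_eq_nil.2 (fun b hb => (hat b hb).not_gt), add_zero, hn']
      have hD : (s.filter (fun b => a ≤ b)).card = 1 := by
        rw [hsplit, Multiset.filter_add, Multiset.filter_eq_self.2 hat,
          Multiset.filter_eq_nil.2 (fun b hb => (hlt b hb).not_ge), zero_add, hcard1]
      have hnR : (125 * n' : ℝ) < n := by exact_mod_cast h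
      have hn'R : (1 : ℝ) ≤ n' := by exact_mod_cast hs'pos
      have hmem : (n' : ℝ) + 1 ∈ S := by
        refine ⟨a, by omega, ?_, ?_⟩
        · rw [hC]; linarith
        · rw [hC, hD]; simp
      linarith [min_le_right (n : ℝ) (sInf S), csInf_le hbdd hmem]
  · suffices h : (32 / 1000) * min (n : ℝ) (sInf S) ≤ sInf {y : ℝ | ∃ L : ℕ, 1 ≤ L ∧
        (s'.filter (fun a => a < L)).sum < n' ∧
        y = (((s'.filter (fun a => a < L)).sum : ℝ) +
              ((s'.filter (fun a => L ≤ a)).card : ℝ)) *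
            max 1 (Real.logb 2 (((s'.filter (fun a => L ≤ a)).card : ℝ)))} by
      linarith
    refine le_csInf ⟨_, 1, le_rfl, ?_, rfl⟩ ?_
    · rw [Multiset.filter_eq_nil.2]
      · simpa using hs'pos
      · intro b hb
        have := hpos b (by rw [hsplit]; exact Multiset.mem_add.2 (Or.inl hb))
        omega
    rintro y ⟨L, hL1, hL, rfl⟩
    have htL := forall_le_of_sum_filter_lt hge (hn'.symm ▸ hL)
    have hC : (s.filter (fun b => b < L)).sum = (s'.filter (fun b => b < L)).sum := by
      rw [hsplit, Multiset.filter_add,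
        Multiset.filter_eq_nil.2 (fun b hb => (htL b hb).not_gt), add_zero]
    have hD : (s.filter (fun b => L ≤ b)).card = (s'.filter (fun b => L ≤ b)).card + t.card := by
      rw [hsplit, Multiset.filter_add, Multiset.filter_eq_self.2 htL, Multiset.card_add]
    have hDpos : 0 < (s'.filter (fun b => L ≤ b)).card := by
      refine Multiset.card_pos.2 fun h0 => ?_
      have := sum_filter_lt_add_sum_filter_ge s' L
      rw [h0, Multiset.sum_zero] at this
      omega
    have hcount := card_le_card_filter_add_one (L := L) hat has (by omega)
    set C := (s'.filter (fun b => b < L)).sum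
    set D := (s'.filter (fun b => L ≤ b)).card
    have hC0 : (0 : ℝ) ≤ C := C.cast_nonneg
    have hD1 : (1 : ℝ) ≤ D := by exact_mod_cast hDpos
    have hlog := le_max_left 1 (Real.logb 2 (D : ℝ))
    have hle := le_mul_of_one_le_right (add_nonneg hC0 (zero_le_one.trans hD1)) hlog
    rcases le_or_gt n (2 * C) with h | h
    · have h' : (n : ℝ) ≤ 2 * C := by exact_mod_cast h
      linarith [min_le_left (n : ℝ) (sInf S)]
    · have h4 : ((D + t.card : ℕ) : ℝ) ≤ 4 * D := by
        have := hcount (by omega)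
        exact_mod_cast (by omega : D + t.card ≤ 4 * D)
      have hmem : ((C : ℝ) + (D + t.card : ℕ)) * max 1 (Real.logb 2 (D + t.card : ℕ)) ∈ S := by
        refine ⟨L, hL1, ?_, by rw [hC, hD]⟩
        have h' : (2 * C : ℝ) < n := by exact_mod_cast h
        rw [hC]; linarith
      have hbound : ((C : ℝ) + (D + t.card : ℕ)) * max 1 (Real.logb 2 (D + t.card : ℕ)) ≤
          (4 * (C + D)) * (3 * max 1 (Real.logb 2 D)) :=
        mul_le_mul (by linarith)
          (max_one_logb_two_le hD1 (by exact_mod_cast (by omega : 0 < D + t.card)) h4)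
          (zero_le_one.trans (le_max_left _ _)) (by positivity)
      linarith [min_le_right (n : ℝ) (sInf S), csInf_le hbdd hmem]
end

section
/- Let s₁ ≥ s₂ ≥ … ≥ s_m ≥ 1 be integers with m ≥ 2 and s₁ + … + s_m = n. Let k < m be the least index such that s_{k+1} + … + s_m ≤ (3/4)·n, put s' = (s_{k+1}, …, s_m) and n' = s_{k+1} + … + s_m, and for an integer L let C'(L) = ∑_{j > k, s_j < L} s_j and D'(L) = #{j > k : s_j ≥ L}. Let p : Fin n → List Bool be any function with ∑_x (length of p(x)) ≤ 2·min( n'/8 , (1/32)·min_{L ≥ 1, C'(L) < n'} (C'(L) + D'(L))·max{1, log₂ D'(L)} ). Then there exists a partition of Fin n into sets X₁, …, X_m with |X_j| = s_j for every j, such that for every j the set {p(x) : x ∈ X_j} is totally ordered by the prefix relation (all positions of X_j lie on a common root-to-leaf path). -/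
open Finset

/-- If every superlevel set of `S` at a positive level is at least as large on `Y` as on `X`,
then the sum of `S` over `Y` is at least its sum over `X`. -/
theorem sum_le_sum_of_card_superlevel_le {ι : Type*} (S : ι → ℕ) (X Y : Finset ι)
    (h : ∀ l, 1 ≤ l → #{i ∈ X | l ≤ S i} ≤ #{i ∈ Y | l ≤ S i}) :
    ∑ i ∈ X, S i ≤ ∑ i ∈ Y, S i := by
  classical
  set M := ∑ i ∈ X ∪ Y, S i with hM
  have layer : ∀ Z ⊆ X ∪ Y, ∑ i ∈ Z, S i = ∑ l ∈ Ico 1 (M + 1), #{i ∈ Z | l ≤ S i} := by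
    intro Z hZ
    simp_rw [card_filter]
    rw [sum_comm]
    refine sum_congr rfl fun i hi => ?_
    have hle : S i ≤ M := single_le_sum (f := S) (fun _ _ => Nat.zero_le _) (hZ hi)
    rw [← card_filter]
    have : {l ∈ Ico 1 (M + 1) | l ≤ S i} = Ico 1 (S i + 1) := by
      ext l
      simp only [mem_filter, mem_Ico]
      omega
    rw [this, Nat.card_Ico]
    omega
  rw [layer X subset_union_left, layer Y subset_union_right]
  exact sum_le_sum fun l hl => h l (mem_Ico.1 hl).1

/-- If `S` has larger sum over `A` than over `F`, there is a level `L` above which `A` has at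
least as many indices as `F`, and below which `S` has at most as large a sum over `A` as
over `F`. -/
theorem exists_balanced_level {ι : Type*} (S : ι → ℕ) (A F : Finset ι)
    (h : ∑ i ∈ F, S i < ∑ i ∈ A, S i) :
    ∃ L, 1 ≤ L ∧ {i ∈ A | L ≤ S i}.Nonempty ∧ #{i ∈ F | L ≤ S i} ≤ #{i ∈ A | L ≤ S i} ∧
      ∑ i ∈ A with S i < L, S i ≤ ∑ i ∈ F with S i < L, S i := by
  classical
  have hex : ∃ L, 1 ≤ L ∧ {i ∈ A | L ≤ S i}.Nonempty ∧
      #{i ∈ F | L ≤ S i} ≤ #{i ∈ A | L ≤ S i} := by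
    by_contra! hno
    refine absurd (sum_le_sum_of_card_superlevel_le S A F fun l hl => ?_) (not_le.2 h)
    rcases {i ∈ A | l ≤ S i}.eq_empty_or_nonempty with he | hne
    · simp [he]
    · exact (hno l hl hne).le
  obtain ⟨hL1, hne, hcard⟩ := Nat.find_spec hex
  have hmin := fun l => Nat.find_min hex (m := l)
  set L := Nat.find hex
  refine ⟨L, hL1, hne, hcard, sum_le_sum_of_card_superlevel_le S _ _ fun l hl => ?_⟩
  have hsplit : ∀ Z : Finset ι, l < L →
      #{i ∈ {i ∈ Z | S i < L} | l ≤ S i} + #{i ∈ Z | L ≤ S i} = #{i ∈ Z | l ≤ S i} := by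
    intro Z hlL
    rw [← card_union_of_disjoint]
    · congr 1
      ext i
      simp only [mem_union, mem_filter]
      grind
    · rw [disjoint_left]
      simp only [mem_filter]
      grind
  rcases lt_or_ge l L with hlL | hLl
  · have hbad : #{i ∈ A | l ≤ S i} < #{i ∈ F | l ≤ S i} := by
      by_contra! hle
      refine hmin l hlL ⟨hl, hne.mono fun i => ?_, hle⟩
      simp only [mem_filter]
      grind
    have hA := hsplit A hlL
    have hF := hsplit F hlL
    omega
  · have : {i ∈ {i ∈ A | S i < L} | l ≤ S i} = ∅ := by
      ext i
      simp only [mem_filter, notMem_empty, iff_false]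
      grind
    simp [this]

/-- A finite set of binary strings of length less than `d` has fewer than `2 ^ d` elements. -/
theorem card_lt_two_pow_of_length_lt (d : ℕ) (K : Finset (List Bool))
    (hK : ∀ u ∈ K, u.length < d) : #K < 2 ^ d := by
  classical
  induction d generalizing K with
  | zero =>
    have : K = ∅ := eq_empty_of_forall_notMem fun u hu => by simpa using hK u hu
    simp [this]
  | succ d ih =>
    have hsub : K ⊆ {u ∈ K | u.length < d} ∪
        (univ : Finset (List.Vector Bool d)).image List.Vector.toList := by
      intro u hu
      rcases Nat.lt_succ_iff_lt_or_eq.1 (hK u hu) with h | h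
      · exact mem_union_left _ (mem_filter.2 ⟨hu, h⟩)
      · exact mem_union_right _ (mem_image.2 ⟨⟨u, h⟩, mem_univ _, rfl⟩)
    have hlt := ih {u ∈ K | u.length < d} fun u hu => (mem_filter.1 hu).2
    have hvec : #((univ : Finset (List.Vector Bool d)).image List.Vector.toList) ≤ 2 ^ d :=
      card_image_le.trans (by simp)
    have hle := (card_le_card hsub).trans (card_union_le _ _)
    rw [pow_succ]
    omega

section Greedy

variable {α β : Type*} [DecidableEq β]

/-- From any finite set one can remove up to `c` elements of a largest fibre. -/
theorem exists_subset_largest_fiber [Inhabited β] (p : α → β) (Z : Finset α) (c : ℕ) :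
    ∃ (Y : Finset α) (u : β), Y ⊆ Z ∧ (∀ y ∈ Y, p y = u) ∧
      (∀ v, #{x ∈ Z | p x = v} ≤ #{x ∈ Z | p x = u}) ∧
      (#Y = c ∨ (#Y < c ∧ Y = {x ∈ Z | p x = u})) := by
  obtain ⟨u, hu⟩ : ∃ u, ∀ v, #{x ∈ Z | p x = v} ≤ #{x ∈ Z | p x = u} := by
    rcases Z.eq_empty_or_nonempty with rfl | hZ
    · exact ⟨default, by simp⟩
    · obtain ⟨x, -, hx⟩ := exists_max_image Z (fun x => #{y ∈ Z | p y = p x}) hZ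
      refine ⟨p x, fun v => ?_⟩
      rcases {y ∈ Z | p y = v}.eq_empty_or_nonempty with he | ⟨y, hy⟩
      · simp [he]
      · obtain ⟨hyZ, rfl⟩ := mem_filter.1 hy
        exact hx y hyZ
  rcases le_or_gt c #{x ∈ Z | p x = u} with hc | hc
  · obtain ⟨Y, hY, hcard⟩ := exists_subset_card_eq hc
    exact ⟨Y, u, hY.trans (filter_subset _ _), fun y hy => (mem_filter.1 (hY hy)).2, hu,
      Or.inl hcard⟩
  · exact ⟨_, u, filter_subset _ _, fun y hy => (mem_filter.1 hy).2, hu, Or.inr ⟨hc, rfl⟩⟩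

/-- Iterating the removal of up to `S i` elements of a largest fibre. -/
theorem exists_greedy_removal [DecidableEq α] [Inhabited β] (p : α → β) (Z₀ : Finset α) (S : ℕ → ℕ) :
    ∃ (Z Y : ℕ → Finset α) (u : ℕ → β), Z 0 = Z₀ ∧ (∀ i, Z (i + 1) = Z i \ Y i) ∧
      (∀ i, Y i ⊆ Z i) ∧ (∀ i, ∀ y ∈ Y i, p y = u i) ∧
      (∀ i v, #{x ∈ Z i | p x = v} ≤ #{x ∈ Z i | p x = u i}) ∧
      (∀ i, #(Y i) = S i ∨ (#(Y i) < S i ∧ Y i = {x ∈ Z i | p x = u i})) := by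
  choose Y u hYZ hYu hmax hcard using exists_subset_largest_fiber p
  let Z : ℕ → Finset α := fun i => Nat.rec Z₀ (fun i Z => Z \ Y Z (S i)) i
  exact ⟨Z, fun i => Y (Z i) (S i), fun i => u (Z i) (S i), rfl, fun _ => rfl,
    fun _ => hYZ _ _, fun _ => hYu _ _, fun _ => hmax _ _, fun _ => hcard _ _⟩

/-- Disjoint sets can be enlarged to a partition with prescribed part sizes. -/
theorem exists_partition_extending {ι : Type*} [Fintype ι] [Fintype α] [DecidableEq α]
    (s : ι → ℕ) (hs : ∑ j, s j = Fintype.card α) (Y : ι → Finset α)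
    (hcard : ∀ j, #(Y j) ≤ s j) (hdisj : ∀ j j', j ≠ j' → Disjoint (Y j) (Y j')) :
    ∃ X : ι → Finset α, (∀ j, #(X j) = s j) ∧ (∀ j j', j ≠ j' → Disjoint (X j) (X j')) ∧
      (∀ x, ∃ j, x ∈ X j) ∧ ∀ j, ∀ x ∈ X j, x ∈ Y j ∨ ∀ j', x ∉ Y j' := by
  set U := univ.biUnion Y with hU
  have hUcard : #U = ∑ j, #(Y j) := card_biUnion fun j _ j' _ h => hdisj j j' h
  have hrest : Fintype.card {x // x ∈ Uᶜ} = Fintype.card (Σ j, Fin (s j - #(Y j))) := by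
    rw [Fintype.card_coe, Fintype.card_sigma, card_compl, hUcard, ← hs]
    simp only [Fintype.card_fin]
    have : ∑ j, s j = ∑ j, (s j - #(Y j)) + ∑ j, #(Y j) := by
      rw [← sum_add_distrib]
      exact sum_congr rfl fun j _ => (Nat.sub_add_cancel (hcard j)).symm
    omega
  let e := Fintype.equivOfCardEq hrest
  let V : ι → Finset α := fun j => univ.image fun a : Fin (s j - #(Y j)) => (e.symm ⟨j, a⟩ : α)
  have hVU : ∀ j, ∀ x ∈ V j, x ∉ U := by
    intro j x hx
    obtain ⟨a, -, rfl⟩ := mem_image.1 hx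
    exact mem_compl.1 (e.symm ⟨j, a⟩).2
  have hYU : ∀ j, ∀ x ∈ Y j, x ∈ U := fun j x hx => mem_biUnion.2 ⟨j, mem_univ _, hx⟩
  have hVcard : ∀ j, #(V j) = s j - #(Y j) := by
    intro j
    rw [card_image_of_injective, card_univ, Fintype.card_fin]
    intro a b hab
    simpa using e.symm.injective (Subtype.ext hab)
  have hVdisj : ∀ j j', j ≠ j' → Disjoint (V j) (V j') := by
    intro j j' hne
    rw [disjoint_left]
    intro x hx hx'
    obtain ⟨a, -, rfl⟩ := mem_image.1 hx
    obtain ⟨b, -, hb⟩ := mem_image.1 hx'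
    have := e.symm.injective (Subtype.ext hb)
    exact hne (congrArg Sigma.fst this).symm
  refine ⟨fun j => Y j ∪ V j, fun j => ?_, fun j j' hne => ?_, fun x => ?_, fun j x hx => ?_⟩
  · rw [card_union_of_disjoint, hVcard]
    · exact Nat.add_sub_cancel' (hcard j)
    · exact disjoint_left.2 fun x hx hx' => hVU j x hx' (hYU j x hx)
  · rw [disjoint_union_left, disjoint_union_right, disjoint_union_right]
    exact ⟨⟨hdisj j j' hne, disjoint_left.2 fun x hx hx' => hVU j' x hx' (hYU j x hx)⟩,
      disjoint_left.2 fun x hx hx' => hVU j x hx (hYU j' x hx'), hVdisj j j' hne⟩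
  · by_cases hx : x ∈ U
    · obtain ⟨j, -, hj⟩ := mem_biUnion.1 hx
      exact ⟨j, mem_union_left _ hj⟩
    · let y : {x // x ∈ Uᶜ} := ⟨x, mem_compl.2 hx⟩
      exact ⟨(e y).1, mem_union_right _ (mem_image.2 ⟨(e y).2, mem_univ _, by simp [y]⟩)⟩
  · rcases mem_union.1 hx with h | h
    · exact Or.inl h
    · exact Or.inr fun j' hj' => hVU j x h (hYU j' x hj')

end Greedy

/-- Let `Z ⊆ Z₀` and let `K` be a set of at least `2 * 2 ^ d` positions that `Z` avoids and
whose fibres in `Z₀` are nonempty and at least as large as every fibre of `Z`. Then the total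
depth of `Z₀` is large. -/
theorem total_depth_lower_bound {α : Type*} [DecidableEq α] (p : α → List Bool)
    (Z₀ Z : Finset α) (hZ : Z ⊆ Z₀) (K : Finset (List Bool)) (d : ℕ) (hd : 2 * 2 ^ d ≤ #K)
    (hKZ : ∀ x ∈ Z, p x ∉ K) (hpos : ∀ u ∈ K, 1 ≤ #{x ∈ Z₀ | p x = u})
    (hmax : ∀ u ∈ K, ∀ v, #{x ∈ Z | p x = v} ≤ #{x ∈ Z₀ | p x = u}) :
    d * (2 * #Z + #K) ≤ 4 * ∑ x ∈ Z₀, (p x).length := by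
  set K' := {u ∈ K | d ≤ u.length} with hK'
  set Q := {x ∈ Z₀ | p x ∈ K'} with hQ
  set Zd := {x ∈ Z | d ≤ (p x).length} with hZd
  set Zs := {x ∈ Z | ¬ d ≤ (p x).length} with hZs
  have hKs : #{u ∈ K | ¬ d ≤ u.length} < 2 ^ d :=
    card_lt_two_pow_of_length_lt d _ fun u hu => not_le.1 (mem_filter.1 hu).2
  have hKsplit : #K' + #{u ∈ K | ¬ d ≤ u.length} = #K :=
    card_filter_add_card_filter_not _
  have hZsplit : #Zd + #Zs = #Z := card_filter_add_card_filter_not _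
  have hQfib : ∑ u ∈ K', #{x ∈ Z₀ | p x = u} = #Q := by
    have hmaps : Set.MapsTo p Q K' := fun x hx => (mem_filter.1 hx).2
    rw [card_eq_sum_card_fiberwise hmaps]
    refine sum_congr rfl fun u hu => congrArg card ?_
    ext x
    simp only [hQ, mem_filter]
    grind
  have hQK : #K' ≤ #Q := by
    rw [← hQfib, card_eq_sum_ones]
    exact sum_le_sum fun u hu => hpos u (mem_filter.1 hu).1
  have hsQ : #Zs ≤ #Q := by
    have himg : #(Zs.image p) ≤ #K' := by
      have := card_lt_two_pow_of_length_lt d (Zs.image p) fun u hu => by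
        obtain ⟨x, hx, rfl⟩ := mem_image.1 hu
        exact not_le.1 (mem_filter.1 hx).2
      omega
    have hfib : ∀ v ∈ Zs.image p, ∀ u ∈ K', #{x ∈ Zs | p x = v} ≤ #{x ∈ Z₀ | p x = u} :=
      fun v _ u hu => (card_le_card (filter_subset_filter _ (filter_subset _ _))).trans
        (hmax u (mem_filter.1 hu).1 v)
    obtain ⟨f⟩ := Function.Embedding.nonempty_of_card_le
      (α := Zs.image p) (β := K') (by simpa using himg)
    rw [card_eq_sum_card_image p Zs, ← hQfib, ← sum_coe_sort (Zs.image p), ← sum_coe_sort K']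
    calc ∑ v : Zs.image p, #{x ∈ Zs | p x = v}
        ≤ ∑ v : Zs.image p, #{x ∈ Z₀ | p x = f v} :=
          sum_le_sum fun v _ => hfib v v.2 (f v) (f v).2
      _ = ∑ u ∈ univ.map f, #{x ∈ Z₀ | p x = u} := by rw [sum_map]
      _ ≤ ∑ u : K', #{x ∈ Z₀ | p x = u} :=
          sum_le_sum_of_subset (subset_univ _)
  have hdisj : Disjoint Q Zd := disjoint_left.2 fun x hx hx' =>
    hKZ x (mem_filter.1 hx').1 (mem_filter.1 (mem_filter.1 hx).2).1
  have hdepth : d * (#Q + #Zd) ≤ ∑ x ∈ Z₀, (p x).length := by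
    rw [← card_union_of_disjoint hdisj, mul_comm, ← smul_eq_mul]
    refine (card_nsmul_le_sum _ (fun x => (p x).length) d fun x hx => ?_).trans
      (sum_le_sum_of_subset (union_subset (filter_subset _ _) ((filter_subset _ _).trans hZ)))
    rcases mem_union.1 hx with h | h
    · exact (mem_filter.1 (mem_filter.1 h).2).2
    · exact (mem_filter.1 h).2
  calc d * (2 * #Z + #K) ≤ d * (4 * (#Q + #Zd)) := Nat.mul_le_mul_left d (by omega)
    _ = 4 * (d * (#Q + #Zd)) := by ring
    _ ≤ _ := Nat.mul_le_mul_left 4 hdepth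

/-- Under the hypotheses of `total_depth_lower_bound`, without a choice of depth threshold, the
total depth exceeds `(#Z + #K) * (log₂ #K + 2) / 8`, provided no element has depth zero. -/
theorem total_depth_log_lower_bound {α : Type*} [DecidableEq α] (p : α → List Bool)
    (Z₀ Z : Finset α) (hZ : Z ⊆ Z₀) (K : Finset (List Bool)) (hK : K.Nonempty)
    (hroot : ∀ x ∈ Z₀, p x ≠ [])
    (hKZ : ∀ x ∈ Z, p x ∉ K) (hpos : ∀ u ∈ K, 1 ≤ #{x ∈ Z₀ | p x = u})
    (hmax : ∀ u ∈ K, ∀ v, #{x ∈ Z | p x = v} ≤ #{x ∈ Z₀ | p x = u}) :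
    (#Z + #K) * (Nat.log 2 #K + 2) < 8 * ∑ x ∈ Z₀, (p x).length := by
  have hK0 : 0 < #K := hK.card_pos
  rcases le_or_gt (Nat.log 2 #K) 4 with he | he
  · have hcount : #K ≤ #{x ∈ Z₀ | p x ∈ K} := by
      refine (card_le_card (t := {x ∈ Z₀ | p x ∈ K}.image p) fun u hu => ?_).trans card_image_le
      obtain ⟨x, hx⟩ := card_pos.1 (hpos u hu)
      obtain ⟨hxZ, rfl⟩ := mem_filter.1 hx
      exact mem_image_of_mem p (mem_filter.2 ⟨hxZ, hu⟩)
    have hdisj : Disjoint Z {x ∈ Z₀ | p x ∈ K} :=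
      disjoint_left.2 fun x hx hx' => hKZ x hx (mem_filter.1 hx').2
    have hZ₀ : #Z + #{x ∈ Z₀ | p x ∈ K} ≤ #Z₀ := by
      rw [← card_union_of_disjoint hdisj]
      exact card_le_card (union_subset hZ (filter_subset _ _))
    have hone : #Z₀ ≤ ∑ x ∈ Z₀, (p x).length := by
      rw [card_eq_sum_ones]
      exact sum_le_sum fun x hx => List.length_pos_iff.2 (hroot x hx)
    have : (#Z + #K) * (Nat.log 2 #K + 2) ≤ (#Z + #K) * 6 := Nat.mul_le_mul_left _ (by omega)
    omega
  · obtain ⟨d, hd⟩ : ∃ d, Nat.log 2 #K = d + 1 := ⟨Nat.log 2 #K - 1, by omega⟩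
    have hpow : 2 * 2 ^ d ≤ #K := by
      have := Nat.pow_log_le_self 2 hK0.ne'
      rw [hd, pow_succ] at this
      omega
    have hmain := total_depth_lower_bound p Z₀ Z hZ K d hpow hKZ hpos hmax
    rw [hd]
    have hd4 : 4 ≤ d := by omega
    nlinarith


/-- The bound `(C + D) * max 1 (log₂ D)` when `C ≤ 2 * R` and `0 < D ≤ 2 * b`. -/
theorem add_mul_max_logb_le (C D R b : ℕ) (hD0 : 0 < D) (hC : C ≤ 2 * R) (hD : D ≤ 2 * b) :
    ((C : ℝ) + D) * max 1 (Real.logb 2 D) ≤ 2 * ((R + b) * (Nat.log 2 b + 2) : ℕ) := by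
  have hlog : max 1 (Real.logb 2 (D : ℝ)) ≤ (Nat.log 2 b + 2 : ℕ) := by
    refine max_le (by exact_mod_cast Nat.le_add_left 1 _) ?_
    rw [Real.logb_le_iff_le_rpow one_lt_two (by exact_mod_cast hD0), Real.rpow_natCast]
    have hb := Nat.lt_pow_succ_log_self one_lt_two b
    rw [Nat.succ_eq_add_one] at hb
    have hle : D ≤ 2 ^ (Nat.log 2 b + 2) := by
      rw [pow_succ]
      omega
    exact_mod_cast hle
  have hCD : (C : ℝ) + D ≤ 2 * ((R + b : ℕ) : ℝ) := by
    exact_mod_cast (by omega : C + D ≤ 2 * (R + b))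
  refine (mul_le_mul hCD hlog (by positivity) (by positivity)).trans_eq ?_
  rw [Nat.cast_mul, mul_assoc]

/-- Combinatorial core of Proposition 13 ('lower_block_sorting'): if the total depth of
all elements is at most twice `min(n'/8, (1/32)·min_L (C'(L)+D'(L))·max{1, log₂ D'(L)})`,
then the cluster structure with sizes `s₁ ≥ … ≥ s_m` can be realized so that every
cluster lies on a single root-to-leaf path. Here `k` is the least index such that the
tail `s' = (s_{k+1}, …, s_m)` (0-indexed: indices `≥ k`) has sum `n' ≤ (3/4)·n`. -/
theorem stmt_6 (m n n' k : ℕ) (hm : 2 ≤ m) (s : Fin m → ℕ)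
    (hdec : ∀ i j : Fin m, i ≤ j → s j ≤ s i)
    (hpos : ∀ j, 1 ≤ s j)
    (hsum : ∑ j, s j = n)
    (hk : k < m)
    (hn' : ∑ j ∈ Finset.univ.filter (fun j : Fin m => k ≤ (j : ℕ)), s j = n')
    (htail : (n' : ℝ) ≤ (3 / 4) * n)
    (hleast : ∀ k' < k, (3 / 4 : ℝ) * n <
      ((∑ j ∈ Finset.univ.filter (fun j : Fin m => k' ≤ (j : ℕ)), s j : ℕ) : ℝ))
    (C' D' : ℕ → ℕ)
    (hC' : ∀ L, C' L = ∑ j ∈ Finset.univ.filter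
      (fun j : Fin m => k ≤ (j : ℕ) ∧ s j < L), s j)
    (hD' : ∀ L, D' L = (Finset.univ.filter
      (fun j : Fin m => k ≤ (j : ℕ) ∧ L ≤ s j)).card)
    (p : Fin n → List Bool)
    (hp : (∑ x, ((p x).length : ℝ)) ≤
      2 * min ((n' : ℝ) / 8)
        ((1 / 32) * sInf {y : ℝ | ∃ L : ℕ, 1 ≤ L ∧ C' L < n' ∧
          y = ((C' L : ℝ) + (D' L : ℝ)) * max 1 (Real.logb 2 ((D' L : ℝ)))})) :
    ∃ X : Fin m → Finset (Fin n),
      (∀ j, (X j).card = s j) ∧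
      (∀ j j', j ≠ j' → Disjoint (X j) (X j')) ∧
      (∀ x, ∃ j, x ∈ X j) ∧
      (∀ j, ∀ x ∈ X j, ∀ y ∈ X j, p x <+: p y ∨ p y <+: p x) := by
  classical
  obtain ⟨S, hS⟩ : ∃ S : ℕ → ℕ, ∀ i, S i = if h : i < m then s ⟨i, h⟩ else 0 := ⟨_, fun _ => rfl⟩
  have hSs : ∀ j : Fin m, S j = s j := fun j => by simp [hS]
  have hSm : S m = 0 := by simp [hS]
  have hanti : ∀ i j, i ≤ j → S j ≤ S i := by
    intro i j hij
    by_cases hj : j < m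
    · simpa [hS, hj, hij.trans_lt hj] using hdec ⟨i, hij.trans_lt hj⟩ ⟨j, hj⟩ hij
    · simp [hS, hj]
  have hIco : ∀ (P : ℕ → Prop) [DecidablePred P], ({j : Fin m | k ≤ (j : ℕ) ∧ P (s j)} : Finset (Fin m)).map
      Fin.valEmbedding = {i ∈ Ico k m | P (S i)} := by
    intro P _
    ext i
    simp only [mem_map, mem_filter, mem_univ, true_and, mem_Ico, Fin.valEmbedding_apply]
    constructor
    · rintro ⟨j, ⟨hkj, hj⟩, rfl⟩
      exact ⟨⟨hkj, j.2⟩, by rwa [hSs]⟩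
    · rintro ⟨⟨hki, him⟩, hi⟩
      exact ⟨⟨i, him⟩, ⟨hki, by simpa [hS, him] using hi⟩, rfl⟩
  have hsumIco : ∀ (P : ℕ → Prop) [DecidablePred P],
      ∑ j ∈ ({j : Fin m | k ≤ (j : ℕ) ∧ P (s j)} : Finset (Fin m)), s j =
        ∑ i ∈ Ico k m with P (S i), S i := by
    intro P _
    rw [← hIco P, sum_map]
    exact sum_congr rfl fun j _ => (hSs j).symm
  have hn'S : ∑ i ∈ Ico k m, S i = n' := by
    rw [← hn']
    simpa using (hsumIco fun _ => True).symm
  have hn'pos : 0 < n' := by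
    rw [← hn']
    exact sum_pos (fun j _ => hpos j) ⟨⟨k, hk⟩, by simp⟩
  set Z₀ : Finset (Fin n) := {x | p x ≠ []} with hZ₀
  have hroot : ∀ x ∈ Z₀, p x ≠ [] := fun x hx => (mem_filter.1 hx).2
  obtain ⟨Z, Y, u, hZ0, hZs, hYZ, hYu, hmax, hYcard⟩ := exists_greedy_removal p Z₀ S
  have hZanti : Antitone Z := antitone_nat_of_succ_le fun i => by
    rw [hZs]
    exact sdiff_subset
  have hYle : ∀ i, #(Y i) ≤ S i := fun i => by
    rcases hYcard i with h | h
    · exact h.le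
    · exact h.1.le
  have hYdisj : ∀ i j, i < j → Disjoint (Y i) (Y j) := fun i j hij => by
    refine disjoint_left.2 fun x hx hx' => ?_
    have := hZanti (Nat.succ_le_of_lt hij) (hYZ j hx')
    rw [Nat.succ_eq_add_one, hZs] at this
    exact (mem_sdiff.1 this).2 hx
  by_cases hfin : Z m = ∅
  · have hcover : ∀ i, ∀ x ∈ Z₀, x ∈ Z i ∨ ∃ j < i, x ∈ Y j := by
      intro i x hx
      induction i with
      | zero => exact Or.inl (hZ0 ▸ hx)
      | succ i ih =>
        rcases ih with h | ⟨j, hj, h⟩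
        · by_cases hy : x ∈ Y i
          · exact Or.inr ⟨i, i.lt_succ_self, hy⟩
          · exact Or.inl (by rw [hZs]; exact mem_sdiff.2 ⟨h, hy⟩)
        · exact Or.inr ⟨j, hj.trans i.lt_succ_self, h⟩
    obtain ⟨X, hXcard, hXdisj, hXcover, hX⟩ := exists_partition_extending s (by simpa using hsum)
      (fun j : Fin m => Y j) (fun j => (hYle j).trans (hSs j).le) fun j j' hne => by
        rcases lt_or_gt_of_ne hne with h | h
        · exact hYdisj _ _ h
        · exact (hYdisj _ _ h).symm
    refine ⟨X, hXcard, hXdisj, hXcover, fun j => ?_⟩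
    have hpX : ∀ x ∈ X j, p x = u j ∨ p x = [] := by
      intro x hx
      rcases hX j x hx with h | h
      · exact Or.inl (hYu _ _ h)
      · refine Or.inr (by_contra fun hne => ?_)
        rcases hcover m x (mem_filter.2 ⟨mem_univ _, hne⟩) with h' | ⟨i, hi, h'⟩
        · simp [hfin] at h'
        · exact h ⟨i, hi⟩ h'
    intro x hx y hy
    rcases hpX x hx with hx | hx <;> rcases hpX y hy with hy | hy <;> simp [hx, hy]
  · exfalso
    set T := ∑ x ∈ Z₀, (p x).length with hT
    have hTp : (T : ℝ) ≤ ∑ x, ((p x).length : ℝ) := by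
      rw [hT, Nat.cast_sum]
      exact sum_le_sum_of_subset_of_nonneg (subset_univ _) fun _ _ _ => Nat.cast_nonneg _
    have hTn' : 4 * T ≤ n' := by
      have := hTp.trans (hp.trans (mul_le_mul_of_nonneg_left (min_le_left _ _) zero_le_two))
      have h4 : (4 * T : ℝ) ≤ n' := by linarith
      exact_mod_cast h4
    have hZ₀T : #Z₀ ≤ T := by
      rw [card_eq_sum_ones]
      exact sum_le_sum fun x hx => List.length_pos_iff.2 (hroot x hx)
    have hremove : ∀ I : Finset ℕ, ∀ i₀, (∀ i ∈ I, i₀ ≤ i) → ∑ i ∈ I, #(Y i) ≤ #(Z i₀) := by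
      intro I i₀ hI
      rw [← card_biUnion fun i _ j _ hne => (lt_or_gt_of_ne hne).elim (hYdisj i j)
        fun h => (hYdisj j i h).symm]
      exact card_le_card (biUnion_subset.2 fun i hi => (hYZ i).trans (hZanti (hI i hi)))
    set A := {i ∈ Ico k m | #(Y i) < S i} with hA
    set F := {i ∈ Ico k m | ¬ #(Y i) < S i} with hF
    have hFY : ∀ i ∈ F, S i = #(Y i) := fun i hi =>
      le_antisymm (not_lt.1 (mem_filter.1 hi).2) (hYle i)
    have hAFsum : ∑ i ∈ A, S i + ∑ i ∈ F, S i = n' := by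
      rw [← hn'S]
      exact sum_filter_add_sum_filter_not _ _ _
    have hFA : ∑ i ∈ F, S i < ∑ i ∈ A, S i := by
      have hF₀ : ∑ i ∈ F, S i ≤ #Z₀ := by
        rw [sum_congr rfl hFY, ← hZ0]
        exact hremove F 0 fun _ _ => Nat.zero_le _
      omega
    obtain ⟨L, hL1, hAL, hcard, hbelow⟩ := exists_balanced_level S A F hFA
    have hex : ∃ i, S i < L := ⟨m, by omega⟩
    have hi₀ := Nat.find_spec hex
    have hi₀min := fun i => Nat.find_min hex (m := i)
    have hi₀m : Nat.find hex ≤ m := Nat.find_min' hex (by omega)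
    set i₀ := Nat.find hex
    have hltL : ∀ i, L ≤ S i → i < i₀ := fun i hi => by
      by_contra! h
      exact absurd (hanti _ _ h) (by omega)
    set B := {i ∈ A | L ≤ S i} with hB
    have hBspec : ∀ i ∈ B, i < i₀ ∧ Y i = {x ∈ Z i | p x = u i} := by
      intro i hi
      obtain ⟨hiA, hiL⟩ := mem_filter.1 hi
      refine ⟨hltL i hiL, ?_⟩
      rcases hYcard i with h | h
      · exact absurd (mem_filter.1 hiA).2 (by omega)
      · exact h.2
    have hkill : ∀ i ∈ B, ∀ j, i < j → ∀ x ∈ Z j, p x ≠ u i := by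
      intro i hi j hij x hx hxu
      have := hZanti (Nat.succ_le_of_lt hij) hx
      rw [Nat.succ_eq_add_one, hZs, (hBspec i hi).2] at this
      obtain ⟨h1, h2⟩ := mem_sdiff.1 this
      exact h2 (mem_filter.2 ⟨h1, hxu⟩)
    have hfibpos : ∀ i ≤ m, {x ∈ Z i | p x = u i}.Nonempty := by
      intro i hi
      obtain ⟨x, hx⟩ := nonempty_iff_ne_empty.2 hfin
      refine card_pos.1 (lt_of_lt_of_le ?_ (hmax i (p x)))
      exact card_pos.2 ⟨x, mem_filter.2 ⟨hZanti hi hx, rfl⟩⟩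
    have hinj : Set.InjOn u B := by
      have hlt : ∀ i ∈ B, ∀ j ∈ B, i < j → u i ≠ u j := by
        intro i hi j hj hij heq
        obtain ⟨x, hx⟩ := hfibpos j ((hBspec j hj).1.le.trans hi₀m)
        obtain ⟨hxZ, hxu⟩ := mem_filter.1 hx
        exact hkill i hi j hij x hxZ (hxu.trans heq.symm)
      intro i hi j hj heq
      by_contra hne
      rcases lt_or_gt_of_ne hne with h | h
      · exact hlt i hi j hj h heq
      · exact hlt j hj i hi h heq.symm
    have hZZ₀ : ∀ i, Z i ⊆ Z₀ := fun i => hZ0 ▸ hZanti (Nat.zero_le i)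
    have hlower := total_depth_log_lower_bound p Z₀ (Z i₀) (hZZ₀ i₀) (B.image u) (hAL.image u) hroot
      (by
        intro x hx hxu
        obtain ⟨i, hi, h⟩ := mem_image.1 hxu
        exact hkill i hi i₀ (hBspec i hi).1 x hx h.symm)
      (by
        intro v hv
        obtain ⟨i, hi, rfl⟩ := mem_image.1 hv
        exact card_pos.2 ((hfibpos i ((hBspec i hi).1.le.trans hi₀m)).mono
          (filter_subset_filter _ (hZZ₀ i))))
      (by
        intro v hv w
        obtain ⟨i, hi, rfl⟩ := mem_image.1 hv
        exact (card_le_card (filter_subset_filter _ (hZanti (hBspec i hi).1.le))).trans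
          ((hmax i w).trans (card_le_card (filter_subset_filter _ (hZZ₀ i)))))
    rw [card_image_of_injOn hinj] at hlower
    have hsplit : ∀ (P : ℕ → Prop) [DecidablePred P], {i ∈ Ico k m | P (S i)} =
        {i ∈ A | P (S i)} ∪ {i ∈ F | P (S i)} := by
      intro P _
      rw [← filter_union, hA, hF, filter_union_filter_not_eq]
    have hAF : Disjoint A F := disjoint_filter_filter_not _ _ _
    have hC : C' L ≤ 2 * #(Z i₀) := by
      rw [hC', hsumIco fun t => t < L, hsplit fun t => t < L,
        sum_union (disjoint_filter_filter hAF)]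
      have hFZ : ∑ i ∈ F with S i < L, S i ≤ #(Z i₀) := by
        rw [sum_congr rfl fun i hi => hFY i (mem_filter.1 hi).1]
        refine hremove _ i₀ fun i hi => ?_
        by_contra! h
        exact hi₀min i h (mem_filter.1 hi).2
      omega
    have hDsplit : D' L = #B + #{i ∈ F | L ≤ S i} := by
      rw [hD', ← card_map Fin.valEmbedding, hIco fun t => L ≤ t, hsplit fun t => L ≤ t,
        card_union_of_disjoint (disjoint_filter_filter hAF)]
    have hBpos : 0 < #B := hAL.card_pos
    have hCn' : C' L < n' := by
      obtain ⟨i, hi⟩ := hAL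
      obtain ⟨hiA, hiL⟩ := mem_filter.1 hi
      rw [hC', hsumIco fun t => t < L, ← hn'S]
      exact sum_lt_sum_of_subset (filter_subset _ _) (mem_filter.1 hiA).1
        (by simp [hiL]) (by omega) fun _ _ _ => Nat.zero_le _
    have hupper : (T : ℝ) ≤ 2 * ((1 / 32) * (((C' L : ℝ) + D' L) *
        max 1 (Real.logb 2 (D' L : ℝ)))) := by
      refine hTp.trans (hp.trans (mul_le_mul_of_nonneg_left ((min_le_right _ _).trans
        (mul_le_mul_of_nonneg_left (csInf_le ⟨0, ?_⟩ ⟨L, hL1, hCn', rfl⟩) (by norm_num)))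
        zero_le_two))
      rintro y ⟨l, -, -, rfl⟩
      positivity
    have hbound := add_mul_max_logb_le (C' L) (D' L) #(Z i₀) #B (by omega) hC (by omega)
    have hcontra : (8 * T : ℝ) ≤ ((#(Z i₀) + #B) * (Nat.log 2 #B + 2) : ℕ) := by linarith
    exact absurd (by exact_mod_cast hcontra) (not_le.2 hlower)
end

section
/- Let n ≥ 1, let V be a type, let v : Fin n → V, and let L ≥ 1 be an integer. Let C(L) be the number of indices x ∈ Fin n whose value v(x) is attained by fewer than L indices, and let D(L) be the number of values w ∈ V attained by at least L indices. Suppose D(L) ≥ 1. If S₁, …, S_t are pairwise disjoint subsets of Fin n, each of size exactly 2·D(L), and v is injective on each S_i, then t·D(L) ≤ C(L). -/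
/-- Counting argument in Lemma 1 (Block Sorting): each duplicate-free block of size
`2·D(L)` contains at least `D(L)` elements from clusters of size `< L`, so `t` disjoint
such blocks force `t·D(L) ≤ C(L)`. -/
theorem stmt_7 (n : ℕ) (hn : 1 ≤ n) (V : Type*) [DecidableEq V] (v : Fin n → V)
    (L : ℕ) (hL : 1 ≤ L) (t : ℕ)
    (C D : ℕ)
    (hC : C = (Finset.univ.filter (fun x : Fin n =>
      (Finset.univ.filter (fun y : Fin n => v y = v x)).card < L)).card)
    (hD : D = ((Finset.univ.image v).filter (fun w =>
      L ≤ (Finset.univ.filter (fun y : Fin n => v y = w)).card)).card)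
    (hD1 : 1 ≤ D)
    (S : Fin t → Finset (Fin n))
    (hdisj : ∀ i j, i ≠ j → Disjoint (S i) (S j))
    (hcard : ∀ i, (S i).card = 2 * D)
    (hinj : ∀ i, Set.InjOn v (S i)) :
    t * D ≤ C := by
  have large_le (i : Fin t) : ((S i).filter (fun x : Fin n =>
      ¬ (Finset.univ.filter (fun y : Fin n => v y = v x)).card < L)).card ≤ D := by
    rw [hD]
    refine Finset.card_le_card_of_injOn v (fun x hx => ?_)
      ((hinj i).mono fun x hx => (Finset.mem_filter.mp hx).1)
    have hx' := (Finset.mem_filter.mp hx).2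
    exact Finset.mem_filter.mpr
      ⟨Finset.mem_image_of_mem v (Finset.mem_univ x), not_lt.mp hx'⟩
  have le_small (i : Fin t) : D ≤ ((S i).filter (fun x : Fin n =>
      (Finset.univ.filter (fun y : Fin n => v y = v x)).card < L)).card := by
    have hsplit := Finset.card_filter_add_card_filter_not (s := S i) (fun x : Fin n =>
      (Finset.univ.filter (fun y : Fin n => v y = v x)).card < L)
    have := large_le i
    have := hcard i
    omega
  calc t * D = ∑ _i : Fin t, D := by simp
    _ ≤ ∑ i : Fin t, ((S i).filter (fun x : Fin n =>
          (Finset.univ.filter (fun y : Fin n => v y = v x)).card < L)).card :=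
        Finset.sum_le_sum fun i _ => le_small i
    _ = (Finset.univ.biUnion fun i : Fin t => (S i).filter (fun x : Fin n =>
          (Finset.univ.filter (fun y : Fin n => v y = v x)).card < L)).card :=
        (Finset.card_biUnion fun i _ j _ hij =>
          Finset.disjoint_filter_filter (hdisj i j hij)).symm
    _ ≤ C := by
        rw [hC]
        exact Finset.card_le_card (Finset.biUnion_subset.mpr fun i _ =>
          Finset.filter_subset_filter _ (Finset.subset_univ _))
end

section
/- Let n ≥ 1, let V be a type, let v : Fin n → V, and let L ≥ 1 be an integer. Let C(L) be the number of indices x ∈ Fin n whose value v(x) is attained by fewer than L indices, and let D(L) be the number of values w ∈ V attained by at least L indices. If Fin n can be partitioned into pairwise disjoint sets whose union is Fin n, each of size at least 2·D(L), such that v is injective on each part, then C(L) ≥ n/2. -/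
/-- In a duplicate-free set whose size is at least twice the number of values satisfying `q`,
at least half of the elements have a value not satisfying `q`. -/
theorem card_le_two_mul_card_filter_not {α β : Type*} {v : α → β}
    {P : Finset α} (hinj : Set.InjOn v ↑P) (q : β → Prop) [DecidablePred q] {W : Finset β}
    (hW : ∀ x ∈ P, q (v x) → v x ∈ W) (hsize : 2 * W.card ≤ P.card) :
    P.card ≤ 2 * (P.filter fun x => ¬ q (v x)).card := by
  have hle : (P.filter fun x => q (v x)).card ≤ W.card := by
    refine Finset.card_le_card_of_injOn v (fun x hx => ?_) (hinj.mono ?_)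
    · obtain ⟨hxP, hqx⟩ := Finset.mem_filter.mp hx
      exact hW x hxP hqx
    · exact_mod_cast Finset.filter_subset _ P
  have hsplit := P.card_filter_add_card_filter_not (fun x => q (v x))
  omega

/-- Counting the elements satisfying `p` part by part along a partition. -/
theorem card_filter_eq_sum_of_partition {α : Type*} [Fintype α] [DecidableEq α]
    {parts : Finset (Finset α)} (hdisj : (parts : Set (Finset α)).PairwiseDisjoint id)
    (hcover : ∀ x, ∃ P ∈ parts, x ∈ P) (p : α → Prop) [DecidablePred p] :
    (Finset.univ.filter p).card = ∑ P ∈ parts, (P.filter p).card := by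
  have hunion : parts.biUnion id = Finset.univ := by
    ext x
    simpa using hcover x
  rw [← hunion, Finset.filter_biUnion, Finset.card_biUnion]
  · rfl
  · intro P hP Q hQ hPQ
    exact Finset.disjoint_filter_filter (hdisj hP hQ hPQ)

/-- The 'give up' argument in Lemma 1 (Block Sorting): if `Fin n` can be partitioned
into duplicate-free parts of size at least `2·D(L)`, then `C(L) ≥ n/2`. -/
theorem stmt_8 (n : ℕ) (hn : 1 ≤ n) (V : Type*) [DecidableEq V] (v : Fin n → V)
    (L : ℕ) (hL : 1 ≤ L)
    (C D : ℕ)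
    (hC : C = (Finset.univ.filter (fun x : Fin n =>
      (Finset.univ.filter (fun y : Fin n => v y = v x)).card < L)).card)
    (hD : D = ((Finset.univ.image v).filter (fun w =>
      L ≤ (Finset.univ.filter (fun y : Fin n => v y = w)).card)).card)
    (parts : Finset (Finset (Fin n)))
    (hdisj : (parts : Set (Finset (Fin n))).PairwiseDisjoint id)
    (hcover : ∀ x : Fin n, ∃ P ∈ parts, x ∈ P)
    (hsize : ∀ P ∈ parts, 2 * D ≤ P.card)
    (hinj : ∀ P ∈ parts, Set.InjOn v ↑P) :
    (n : ℝ) / 2 ≤ (C : ℝ) := by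
  have hpart : ∀ P ∈ parts, P.card ≤ 2 * (P.filter fun x =>
      ¬ L ≤ (Finset.univ.filter (fun y : Fin n => v y = v x)).card).card := fun P hP =>
    card_le_two_mul_card_filter_not (hinj P hP)
      (fun w => L ≤ (Finset.univ.filter (fun y : Fin n => v y = w)).card)
      (fun x _ hx => Finset.mem_filter.mpr
        ⟨Finset.mem_image_of_mem v (Finset.mem_univ x), hx⟩)
      (hD ▸ hsize P hP)
  have hsum := Finset.sum_le_sum hpart
  have hn_eq : n = ∑ P ∈ parts, P.card := by
    simpa using card_filter_eq_sum_of_partition hdisj hcover (fun _ => True)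
  simp only [not_le] at hsum
  rw [← hn_eq, ← Finset.mul_sum, ← card_filter_eq_sum_of_partition hdisj hcover, ← hC] at hsum
  have hcast : (n : ℝ) ≤ 2 * C := by exact_mod_cast hsum
  linarith
end

section
/- Let C₀, L₀, C, L be real numbers with 2 ≤ L₀ ≤ C₀, C₀ ≤ C ≤ 2·C₀, and L₀²/C₀ ≤ L ≤ L₀. Then C·log₂(C/L) ≤ 2·C₀·(1 + 2·log₂(C₀/L₀)). -/
/-- Key inequality for Oblivious Median Recursion (Claim 5). -/
theorem stmt_10 (C₀ L₀ C L : ℝ) (h1 : 2 ≤ L₀) (h2 : L₀ ≤ C₀)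
    (h3 : C₀ ≤ C) (h4 : C ≤ 2 * C₀) (h5 : L₀ ^ 2 / C₀ ≤ L) (h6 : L ≤ L₀) :
    C * Real.logb 2 (C / L) ≤ 2 * C₀ * (1 + 2 * Real.logb 2 (C₀ / L₀)) := by
  have hL₀ : 0 < L₀ := by linarith
  have hC₀ : 0 < C₀ := by linarith
  have hC : 0 < C := by linarith
  have hL : 0 < L := lt_of_lt_of_le (by positivity) h5
  have ratio_le : C / L ≤ 2 * (C₀ / L₀) ^ 2 :=
    calc C / L ≤ 2 * C₀ / (L₀ ^ 2 / C₀) := by gcongr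
      _ = 2 * (C₀ / L₀) ^ 2 := by field_simp
  have log_le : Real.logb 2 (C / L) ≤ 1 + 2 * Real.logb 2 (C₀ / L₀) :=
    calc Real.logb 2 (C / L) ≤ Real.logb 2 (2 * (C₀ / L₀) ^ 2) :=
          Real.logb_le_logb_of_le one_lt_two (by positivity) ratio_le
      _ = 1 + 2 * Real.logb 2 (C₀ / L₀) := by
          rw [Real.logb_mul two_ne_zero (by positivity), Real.logb_pow,
            Real.logb_self_eq_one one_lt_two, Nat.cast_ofNat]
  have log_nonneg : 0 ≤ Real.logb 2 (C / L) :=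
    Real.logb_nonneg one_lt_two ((one_le_div hL).2 (by linarith))
  exact mul_le_mul h4 log_le log_nonneg (by positivity)
end
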